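/- Fix an integer d ≥ 3. For every z ∈ ℂ with Im z > 0, the Stieltjes transform of the Kesten–McKay distribution equals the explicit algebraic expression: ∫_{-2}^{2} ρ_d(x)/(x - z) dx = (d-1)·(-(d-2)z + d√(z²-4)) / (2(d² - (d-1)z²)), where the branch of √(z²-4) is chosen with Im √(z²-4) > 0. -/

import Mathlib

/-- The Kesten–McKay density for a `d`-regular graph (normalized adjacency matrix). -/
noncomputable def kestenMcKay (d : ℕ) (x : ℝ) : ℝ :=
  if x ∈ Set.Icc (-2 : ℝ) 2 then
    (1 + 1 / ((d : ℝ) - 1) - x ^ 2 / (d : ℝ))⁻¹ * Real.sqrt (4 - x ^ 2) / (2 * Real.pi)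
  else 0

/-!
Substitute `x = 2 cos θ = u + u⁻¹` with `u = exp (iθ)`, and write `z = m + m⁻¹` with `‖m‖ < 1` and
`p = 1 / (d - 1)`. All factors of the integrand split over the circle,
`(1 + p)² - p x² = (1 - p u²) (1 - p u⁻²)` and `x - z = -(1 - m u) (1 - m u⁻¹) / m`,
so the integrand is a rational function symmetric under `u ↦ u⁻¹`. It can be written as
`k u + k u⁻¹` with `k` holomorphic on the closed unit disc, hence its integral over `[0, π]` is the
integral of `k` over the whole circle, which the mean value property evaluates as `2π k(0)`.
-/

section Integrals

variable {E : Type*} [NormedAddCommGroup E]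

lemma integral_eq_integral_sin_smul_comp_cos [NormedSpace ℝ E] (R : ℝ) (g : ℝ → E) :
    ∫ x in -R..R, g x = ∫ θ in 0..Real.pi, (R * Real.sin θ) • g (R * Real.cos θ) := by
  have deriv_nonpos : ∀ θ ∈ Set.Ioo (min 0 Real.pi) (max 0 Real.pi), -Real.sin θ ≤ 0 := by
    intro θ hθ
    rw [min_eq_left Real.pi_pos.le, max_eq_right Real.pi_pos.le] at hθ
    exact neg_nonpos.2 (Real.sin_nonneg_of_mem_Icc (Set.Ioo_subset_Icc_self hθ))
  have substitution := intervalIntegral.integral_deriv_smul_comp_of_deriv_nonpos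
    (g := fun x ↦ g (R * x)) Real.continuous_cos.continuousOn
    (fun θ _ ↦ Real.hasDerivAt_cos θ) deriv_nonpos
  rw [Real.cos_zero, Real.cos_pi] at substitution
  calc ∫ x in -R..R, g x = R • ∫ x in (-1)..1, g (R * x) := by
        simp [intervalIntegral.smul_integral_comp_mul_left]
    _ = R • ∫ θ in 0..Real.pi, Real.sin θ • g (R * Real.cos θ) := by
        rw [intervalIntegral.integral_symm, ← substitution]
        simp
    _ = ∫ θ in 0..Real.pi, (R * Real.sin θ) • g (R * Real.cos θ) := by
        simp only [← intervalIntegral.integral_smul, mul_smul]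

lemma integral_circleMap_add_circleMap_neg [NormedSpace ℝ E] {f : ℂ → E} {c : ℂ} {R : ℝ}
    (hf : CircleIntegrable f c R) :
    ∫ θ in 0..Real.pi, (f (circleMap c R θ) + f (circleMap c R (-θ))) =
      (2 * Real.pi) • Real.circleAverage f c R := by
  set g : ℝ → E := fun θ ↦ f (circleMap c R θ)
  have periodic : g.Periodic (2 * Real.pi) := (periodic_circleMap c R).comp f
  have integrable (a b : ℝ) : IntervalIntegrable g MeasureTheory.volume a b :=
    periodic.intervalIntegrable₀ Real.two_pi_pos.ne' hf a b
  calc ∫ θ in 0..Real.pi, (g θ + g (-θ))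
      = (∫ θ in 0..Real.pi, g θ) + ∫ θ in -Real.pi..0, g θ := by
        have integrable_neg :
            IntervalIntegrable (fun θ ↦ g (-θ)) MeasureTheory.volume 0 Real.pi := by
          simpa using
            (IntervalIntegrable.iff_comp_neg (a := 0) (b := -Real.pi)).1 (integrable _ _)
        rw [intervalIntegral.integral_add (integrable _ _) integrable_neg,
          intervalIntegral.integral_comp_neg, neg_zero]
    _ = ∫ θ in -Real.pi..(-Real.pi + 2 * Real.pi), g θ := by
        rw [add_comm, intervalIntegral.integral_add_adjacent_intervals (integrable _ _)
          (integrable _ _)]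
        ring_nf
    _ = ∫ θ in 0..2 * Real.pi, g θ := by
        rw [periodic.intervalIntegral_add_eq (-Real.pi) 0, zero_add]
    _ = (2 * Real.pi) • Real.circleAverage f c R := by
        rw [Real.circleAverage_def, smul_inv_smul₀ Real.two_pi_pos.ne']

lemma integral_circleMap_add_circleMap_neg_of_diffContOnCl [NormedSpace ℂ E] [CompleteSpace E]
    {f : ℂ → E} {c : ℂ} {R : ℝ} (hf : DiffContOnCl ℂ f (Metric.ball c |R|)) :
    ∫ θ in 0..Real.pi, (f (circleMap c R θ) + f (circleMap c R (-θ))) = (2 * Real.pi) • f c := by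
  have integrable : CircleIntegrable f c R :=
    (hf.continuousOn_ball.mono Metric.sphere_subset_closedBall).circleIntegrable'
  rw [integral_circleMap_add_circleMap_neg integrable, hf.circleAverage]

end Integrals

section Kernel

/-- The holomorphic half of the Kesten–McKay resolvent integrand in the circle coordinate `u`: up to
a constant factor, the integrand is `kestenMcKayHalf p m u + kestenMcKayHalf p m u⁻¹`, where
`p = 1 / (d - 1)` and the spectral parameter is `m + m⁻¹`. The factor `1 + p * m * u` is chosen so
that the numerator of this sum is a constant multiple of `(u - u⁻¹) ^ 2 = -4 sin² θ`. -/
noncomputable def kestenMcKayHalf (p m u : ℂ) : ℂ :=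
  (1 - u ^ 2) * (1 + p * m * u) / ((1 - p * u ^ 2) * (1 - m * u))

lemma one_sub_mul_ne_zero_of_norm_lt_one {𝕜 : Type*} [NormedDivisionRing 𝕜] {a u : 𝕜}
    (ha : ‖a‖ < 1) (hu : ‖u‖ ≤ 1) : 1 - a * u ≠ 0 := by
  refine sub_ne_zero.2 fun h ↦ ?_
  have norm_lt : ‖a * u‖ < 1 := by
    rw [norm_mul]
    exact mul_lt_one_of_nonneg_of_lt_one_left (norm_nonneg a) ha hu
  rw [← h, norm_one] at norm_lt
  exact lt_irrefl 1 norm_lt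

lemma one_sub_mul_sq_ne_zero_of_norm_lt_one {𝕜 : Type*} [NormedDivisionRing 𝕜] {a u : 𝕜}
    (ha : ‖a‖ < 1) (hu : ‖u‖ ≤ 1) : 1 - a * u ^ 2 ≠ 0 :=
  one_sub_mul_ne_zero_of_norm_lt_one ha (norm_pow u 2 ▸ pow_le_one₀ (norm_nonneg u) hu)

lemma one_add_ne_zero_of_norm_lt_one {𝕜 : Type*} [NormedDivisionRing 𝕜] {a : 𝕜} (ha : ‖a‖ < 1) :
    1 + a ≠ 0 := by
  simpa using one_sub_mul_ne_zero_of_norm_lt_one ha (u := -1) (by simp)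

lemma one_add_sq_sub_mul_add_sq {A : Type*} [CommRing A] {u v : A} (huv : u * v = 1) (p : A) :
    (1 + p) ^ 2 - p * (u + v) ^ 2 = (1 - p * u ^ 2) * (1 - p * v ^ 2) := by
  linear_combination -(2 * p + p ^ 2 * (u * v + 1)) * huv

lemma add_sub_add_inv {K : Type*} [Field K] {u v m : K} (huv : u * v = 1) (hm : m ≠ 0) :
    u + v - (m + m⁻¹) = -((1 - m * u) * (1 - m * v)) / m := by
  field_simp
  linear_combination m ^ 2 * huv

lemma kestenMcKayHalf_add_kestenMcKayHalf {p m u v : ℂ} (huv : u * v = 1)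
    (hpu : 1 - p * u ^ 2 ≠ 0) (hpv : 1 - p * v ^ 2 ≠ 0)
    (hmu : 1 - m * u ≠ 0) (hmv : 1 - m * v ≠ 0) :
    kestenMcKayHalf p m u + kestenMcKayHalf p m v =
      -((1 + p) * (1 - p * m ^ 2) * (u - v) ^ 2) /
        ((1 - p * u ^ 2) * (1 - p * v ^ 2) * ((1 - m * u) * (1 - m * v))) := by
  rw [kestenMcKayHalf, kestenMcKayHalf,
    div_add_div _ _ (mul_ne_zero hpu hmu) (mul_ne_zero hpv hmv)]
  congr 1
  · grind
  · ring

lemma diffContOnCl_kestenMcKayHalf {p m : ℂ} (hp : ‖p‖ < 1) (hm : ‖m‖ < 1) :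
    DiffContOnCl ℂ (kestenMcKayHalf p m) (Metric.ball 0 1) := by
  refine DifferentiableOn.diffContOnCl fun u hu ↦ DifferentiableAt.differentiableWithinAt ?_
  have hu' : ‖u‖ ≤ 1 := by simpa using Metric.closure_ball_subset_closedBall hu
  have denominator_ne_zero : (1 - p * u ^ 2) * (1 - m * u) ≠ 0 :=
    mul_ne_zero (one_sub_mul_sq_ne_zero_of_norm_lt_one hp hu')
      (one_sub_mul_ne_zero_of_norm_lt_one hm hu')
  unfold kestenMcKayHalf
  fun_prop (disch := assumption)

end Kernel

section StieltjesTransform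

variable {p m : ℂ}

lemma sqrt_four_sub_four_mul_cos_sq {θ : ℝ} (hθ : θ ∈ Set.Icc 0 Real.pi) :
    Real.sqrt (4 - (2 * Real.cos θ) ^ 2) = 2 * Real.sin θ := by
  have sq_eq : 4 - (2 * Real.cos θ) ^ 2 = (2 * Real.sin θ) ^ 2 := by
    linear_combination (-4) * Real.sin_sq_add_cos_sq θ
  rw [sq_eq, Real.sqrt_sq (mul_nonneg zero_le_two (Real.sin_nonneg_of_mem_Icc hθ))]

lemma circleMap_mul_circleMap_neg (θ : ℝ) : circleMap 0 1 θ * circleMap 0 1 (-θ) = 1 := by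
  simp [circleMap_zero, ← Complex.exp_add]

lemma circleMap_add_circleMap_neg (θ : ℝ) :
    circleMap 0 1 θ + circleMap 0 1 (-θ) = ((2 * Real.cos θ : ℝ) : ℂ) := by
  simp [circleMap_zero, Complex.two_cos]

lemma circleMap_sub_circleMap_neg_sq (θ : ℝ) :
    (circleMap 0 1 θ - circleMap 0 1 (-θ)) ^ 2 = -((2 * Real.sin θ : ℝ) : ℂ) ^ 2 := by
  have add_eq := circleMap_add_circleMap_neg θ
  push_cast at add_eq ⊢
  linear_combination (circleMap 0 1 θ + circleMap 0 1 (-θ) + 2 * Complex.cos θ) * add_eq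
    - 4 * circleMap_mul_circleMap_neg θ + 4 * Complex.sin_sq_add_cos_sq θ

lemma sin_smul_sqrt_div_eq_kestenMcKayHalf (hp : ‖p‖ < 1) (hm : ‖m‖ < 1) (hm₀ : m ≠ 0)
    {θ : ℝ} (hθ : θ ∈ Set.Icc 0 Real.pi) :
    (2 * Real.sin θ) • ((Real.sqrt (4 - (2 * Real.cos θ) ^ 2) : ℂ) /
        (((1 + p) ^ 2 - p * ((2 * Real.cos θ : ℝ) : ℂ) ^ 2) *
          (((2 * Real.cos θ : ℝ) : ℂ) - (m + m⁻¹)))) =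
      -m / ((1 + p) * (1 - p * m ^ 2)) *
        (kestenMcKayHalf p m (circleMap 0 1 θ) + kestenMcKayHalf p m (circleMap 0 1 (-θ))) := by
  have norm_le (φ : ℝ) : ‖circleMap 0 1 φ‖ ≤ 1 := by simp
  have hp_add : 1 + p ≠ 0 := one_add_ne_zero_of_norm_lt_one hp
  have hpm : 1 - p * m ^ 2 ≠ 0 := one_sub_mul_sq_ne_zero_of_norm_lt_one hp hm.le
  have hpu := one_sub_mul_sq_ne_zero_of_norm_lt_one hp (norm_le θ)
  have hpv := one_sub_mul_sq_ne_zero_of_norm_lt_one hp (norm_le (-θ))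
  have hmu := one_sub_mul_ne_zero_of_norm_lt_one hm (norm_le θ)
  have hmv := one_sub_mul_ne_zero_of_norm_lt_one hm (norm_le (-θ))
  have huv := circleMap_mul_circleMap_neg θ
  rw [kestenMcKayHalf_add_kestenMcKayHalf huv hpu hpv hmu hmv, circleMap_sub_circleMap_neg_sq,
    sqrt_four_sub_four_mul_cos_sq hθ, ← circleMap_add_circleMap_neg,
    one_add_sq_sub_mul_add_sq huv, add_sub_add_inv huv hm₀, Complex.real_smul]
  field_simp

theorem integral_sqrt_four_sub_sq_div (hp : ‖p‖ < 1) (hm : ‖m‖ < 1) (hm₀ : m ≠ 0) :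
    ∫ x in (-2 : ℝ)..2, (Real.sqrt (4 - x ^ 2) : ℂ) /
        (((1 + p) ^ 2 - p * (x : ℂ) ^ 2) * ((x : ℂ) - (m + m⁻¹))) =
      -(2 * Real.pi * m) / ((1 + p) * (1 - p * m ^ 2)) := by
  have half_integral := integral_circleMap_add_circleMap_neg_of_diffContOnCl (R := 1)
    (by simpa using diffContOnCl_kestenMcKayHalf hp hm)
  have half_zero : kestenMcKayHalf p m 0 = 1 := by simp [kestenMcKayHalf]
  rw [integral_eq_integral_sin_smul_comp_cos, intervalIntegral.integral_congr fun θ hθ ↦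
    sin_smul_sqrt_div_eq_kestenMcKayHalf hp hm hm₀ (Set.uIcc_of_le Real.pi_pos.le ▸ hθ),
    intervalIntegral.integral_const_mul, half_integral, half_zero, Complex.real_smul]
  push_cast
  ring

lemma kestenMcKay_eq_of_mem_Icc {d : ℕ} (hd : 2 ≤ d) {x : ℝ} (hx : x ∈ Set.Icc (-2 : ℝ) 2) :
    kestenMcKay d x = (1 + 1 / ((d : ℝ) - 1)) / (2 * Real.pi) * (Real.sqrt (4 - x ^ 2) /
      ((1 + 1 / ((d : ℝ) - 1)) ^ 2 - 1 / ((d : ℝ) - 1) * x ^ 2)) := by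
  have hd' : (2 : ℝ) ≤ d := by exact_mod_cast hd
  have hd₁ : (d : ℝ) - 1 ≠ 0 := by linarith
  have hd₀ : (d : ℝ) ≠ 0 := by linarith
  have denominator_eq : (1 + 1 / ((d : ℝ) - 1)) ^ 2 - 1 / ((d : ℝ) - 1) * x ^ 2 =
      (1 + 1 / ((d : ℝ) - 1)) * (1 + 1 / ((d : ℝ) - 1) - x ^ 2 / d) := by
    field_simp
    ring
  have factor_ne_zero : 1 + 1 / ((d : ℝ) - 1) ≠ 0 := by
    have one_div_pos : 0 < 1 / ((d : ℝ) - 1) := one_div_pos.2 (by linarith)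
    linarith
  rw [kestenMcKay, if_pos hx, denominator_eq]
  generalize 1 + 1 / ((d : ℝ) - 1) = a at factor_ne_zero ⊢
  field_simp

lemma norm_one_div_natCast_sub_one_lt_one {d : ℕ} (hd : 3 ≤ d) : ‖1 / ((d : ℂ) - 1)‖ < 1 := by
  have hd' : (3 : ℝ) ≤ d := by exact_mod_cast hd
  have cast_eq : 1 / ((d : ℂ) - 1) = ((1 / ((d : ℝ) - 1) : ℝ) : ℂ) := by push_cast; rfl
  rw [cast_eq, Complex.norm_real, Real.norm_of_nonneg (one_div_nonneg.2 (by linarith)),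
    div_lt_one (by linarith)]
  linarith

theorem integral_kestenMcKay_div_sub_add_inv {d : ℕ} (hd : 3 ≤ d) (hm : ‖m‖ < 1) (hm₀ : m ≠ 0) :
    ∫ x in (-2 : ℝ)..2, (kestenMcKay d x : ℂ) / ((x : ℂ) - (m + m⁻¹)) =
      -(((d : ℂ) - 1) * m) / ((d : ℂ) - 1 - m ^ 2) := by
  have hd₁ : (d : ℂ) - 1 ≠ 0 := sub_ne_zero.2 (by exact_mod_cast (by lia : d ≠ 1))
  set p : ℂ := 1 / ((d : ℂ) - 1) with hp_def
  have hp : ‖p‖ < 1 := norm_one_div_natCast_sub_one_lt_one hd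
  have hp_add : 1 + p ≠ 0 := one_add_ne_zero_of_norm_lt_one hp
  have integrand_eq : ∀ x ∈ Set.uIcc (-2 : ℝ) 2,
      (kestenMcKay d x : ℂ) / ((x : ℂ) - (m + m⁻¹)) = (1 + p) / (2 * Real.pi) *
        ((Real.sqrt (4 - x ^ 2) : ℂ) /
          (((1 + p) ^ 2 - p * (x : ℂ) ^ 2) * ((x : ℂ) - (m + m⁻¹)))) := by
    intro x hx
    rw [Set.uIcc_of_le (by norm_num)] at hx
    rw [kestenMcKay_eq_of_mem_Icc (by lia) hx]
    push_cast
    rw [mul_div_assoc, div_div]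
  have hpi : (Real.pi : ℂ) ≠ 0 := by exact_mod_cast Real.pi_ne_zero
  calc ∫ x in (-2 : ℝ)..2, (kestenMcKay d x : ℂ) / ((x : ℂ) - (m + m⁻¹))
      = (1 + p) / (2 * Real.pi) *
          (-(2 * Real.pi * m) / ((1 + p) * (1 - p * m ^ 2))) := by
        rw [intervalIntegral.integral_congr integrand_eq, intervalIntegral.integral_const_mul,
          integral_sqrt_four_sub_sq_div hp hm hm₀]
    _ = -m / (1 - p * m ^ 2) := by field_simp
    _ = -(((d : ℂ) - 1) * m) / ((d : ℂ) - 1 - m ^ 2) := by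
        rw [hp_def, ← mul_div_mul_left _ _ hd₁]
        congr 1 <;> field_simp

end StieltjesTransform

section Branch

variable {z s : ℂ}

lemma norm_sub_lt_norm_add_of_im_sq_eq (h : (s ^ 2).im = (z ^ 2).im) (hz : 0 < z.im)
    (hs : 0 < s.im) : ‖z - s‖ < ‖z + s‖ := by
  have im_eq : s.re * s.im = z.re * z.im := by
    simp only [sq, Complex.mul_im] at h
    linarith
  have re_mul_re_nonneg : 0 ≤ z.re * s.re := by
    have eq_div : z.re * s.re = s.re ^ 2 * s.im / z.im := by
      field_simp
      linear_combination -s.re * im_eq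
    rw [eq_div]
    positivity
  have inner_pos : 0 < (z * (starRingEnd ℂ) s).re := by
    simp only [Complex.mul_re, Complex.conj_re, Complex.conj_im]
    linarith [mul_pos hz hs]
  rw [← sq_lt_sq₀ (norm_nonneg _) (norm_nonneg _), ← Complex.normSq_eq_norm_sq,
    ← Complex.normSq_eq_norm_sq, Complex.normSq_sub, Complex.normSq_add]
  linarith

lemma ofReal_mul_sq_ne_ofReal {a b : ℝ} (ha : 0 < a) (hb : 0 ≤ b) (hz : z.im ≠ 0) :
    (a : ℂ) * z ^ 2 ≠ b := by
  intro h
  have re_eq : a * (z.re ^ 2 - z.im ^ 2) = b := by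
    simpa [sq] using congrArg Complex.re h
  have im_eq : a = 0 ∨ z.re * z.im + z.im * z.re = 0 := by
    simpa [sq] using congrArg Complex.im h
  have re_eq_zero : z.re = 0 := by
    refine (mul_eq_zero.1 ?_).resolve_right hz
    linarith [im_eq.resolve_left ha.ne']
  rw [re_eq_zero] at re_eq
  nlinarith [mul_pos ha (sq_pos_of_ne_zero hz)]

lemma exists_norm_lt_one_eq_add_inv (hs : s ^ 2 = z ^ 2 - 4) (hlt : ‖z - s‖ < ‖z + s‖) :
    ∃ m : ℂ, ‖m‖ < 1 ∧ m ≠ 0 ∧ z = m + m⁻¹ ∧ s = m⁻¹ - m := by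
  have mul_eq_one : (z - s) / 2 * ((z + s) / 2) = 1 := by linear_combination -hs / 4
  have inv_eq : ((z - s) / 2)⁻¹ = (z + s) / 2 := inv_eq_of_mul_eq_one_right mul_eq_one
  have norm_mul_eq_one : ‖z - s‖ / 2 * (‖z + s‖ / 2) = 1 := by
    simpa using congrArg norm mul_eq_one
  refine ⟨(z - s) / 2, ?_, left_ne_zero_of_mul_eq_one mul_eq_one, ?_, ?_⟩
  · rw [norm_div, Complex.norm_two]
    nlinarith [norm_nonneg (z - s)]
  · rw [inv_eq]
    ring
  · rw [inv_eq]
    ring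

/-- On the right-hand side, the numerator and denominator share the factor `1 - (d - 1) m²`. -/
lemma neg_mul_div_eq_explicit_formula {d m : ℂ} (hm₀ : m ≠ 0)
    (hpole : (d - 1) * (m + m⁻¹) ^ 2 ≠ d ^ 2) :
    -((d - 1) * m) / (d - 1 - m ^ 2) =
      (d - 1) * (-(d - 2) * (m + m⁻¹) + d * (m⁻¹ - m)) /
        (2 * (d ^ 2 - (d - 1) * (m + m⁻¹) ^ 2)) := by
  have numerator_eq : -(d - 2) * (m + m⁻¹) + d * (m⁻¹ - m) = 2 * (1 - (d - 1) * m ^ 2) / m := by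
    field_simp
    ring
  have denominator_eq : d ^ 2 - (d - 1) * (m + m⁻¹) ^ 2 =
      -((d - 1 - m ^ 2) * (1 - (d - 1) * m ^ 2)) / m ^ 2 := by
    field_simp
    ring
  have denominator_ne_zero : d ^ 2 - (d - 1) * (m + m⁻¹) ^ 2 ≠ 0 := sub_ne_zero.2 hpole.symm
  rw [denominator_eq, div_ne_zero_iff, neg_ne_zero, mul_ne_zero_iff] at denominator_ne_zero
  obtain ⟨⟨hm_sub, hfactor⟩, -⟩ := denominator_ne_zero
  rw [numerator_eq, denominator_eq]
  field_simp

end Branch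

/-- The condition `hlt` selects the branch of `√(z² - 4)` on `ℂ ∖ [-2, 2]` that is asymptotic to `z`
at infinity. For `z = ±d / √(d - 1)` the right-hand side degenerates to `0 / 0`. -/
theorem kestenMcKay_stieltjes_transform_general {d : ℕ} (hd : 3 ≤ d) {z s : ℂ}
    (hs : s ^ 2 = z ^ 2 - 4) (hlt : ‖z - s‖ < ‖z + s‖)
    (hpole : ((d : ℂ) - 1) * z ^ 2 ≠ (d : ℂ) ^ 2) :
    ∫ x in (-2 : ℝ)..2, (kestenMcKay d x : ℂ) / ((x : ℂ) - z) =
      ((d : ℂ) - 1) * (-((d : ℂ) - 2) * z + (d : ℂ) * s) /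
        (2 * ((d : ℂ) ^ 2 - ((d : ℂ) - 1) * z ^ 2)) := by
  obtain ⟨m, hm, hm₀, rfl, rfl⟩ := exists_norm_lt_one_eq_add_inv hs hlt
  rw [integral_kestenMcKay_div_sub_add_inv hd hm hm₀, neg_mul_div_eq_explicit_formula hm₀ hpole]

/-- For `d ≥ 3` and `z` in the upper half-plane, the Stieltjes transform of the
Kesten–McKay distribution is given by the explicit algebraic expression
`(d-1)(-(d-2)z + d√(z²-4)) / (2(d² - (d-1)z²))`, where `s = √(z²-4)` is the branch
with `Im s > 0`. -/
theorem kestenMcKay_stieltjes_transform (d : ℕ) (hd : 3 ≤ d) (z s : ℂ)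
    (hz : 0 < z.im) (hs : s ^ 2 = z ^ 2 - 4) (hsim : 0 < s.im) :
    ∫ x in (-2 : ℝ)..2, (kestenMcKay d x : ℂ) / ((x : ℂ) - z) =
      ((d : ℂ) - 1) * (-((d : ℂ) - 2) * z + (d : ℂ) * s) /
        (2 * ((d : ℂ) ^ 2 - ((d : ℂ) - 1) * z ^ 2)) := by
  have one_lt : (1 : ℝ) < d := by exact_mod_cast (by lia : 1 < d)
  have hpole : ((d : ℂ) - 1) * z ^ 2 ≠ (d : ℂ) ^ 2 := by
    simpa using ofReal_mul_sq_ne_ofReal (sub_pos.2 one_lt) (sq_nonneg (d : ℝ)) hz.ne'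
  exact kestenMcKay_stieltjes_transform_general hd hs
    (norm_sub_lt_norm_add_of_im_sq_eq (by simp [hs]) hz hsim) hpole
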